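/- Let G be a group, M a commutative monoid generated by a subset X, and π a function from X to the normal subgroups of G. Define, for each s ∈ M, π̄_s to be the join of the left-normed iterated commutator subgroups [π_{s₁}, …, π_{s_d}] over all d ≥ 1 and all sequences (s₁, …, s_d) of elements of X with s₁ + ⋯ + s_d = s. Then for all s, t ∈ M, [π̄_s, π̄_t] ≤ π̄_{s+t}. -/

import Mathlib

/-- The left-normed iterated commutator `[A₁, …, A_k]` of a list of subgroups
(`⊤` by convention on the empty list). -/
def iteratedCommutator {G : Type*} [Group G] : List (Subgroup G) → Subgroup G
  | [] => ⊤
  | A :: l => l.foldl (fun H K => ⁅H, K⁆) A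

/-- `π̄_s`: the join of the iterated commutators `[π_{s₁}, …, π_{s_d}]` over all nonempty
sequences `(s₁, …, s_d)` of elements of `X` with `s₁ + ⋯ + s_d = s`. -/
def genFilter {G : Type*} [Group G] {M : Type*} [AddCommMonoid M]
    (X : Set M) (π : M → Subgroup G) (s : M) : Subgroup G :=
  ⨆ l ∈ {l : List M | l ≠ [] ∧ (∀ x ∈ l, x ∈ X) ∧ l.sum = s},
    iteratedCommutator (l.map π)

namespace Subgroup

variable {G : Type*} [Group G]

theorem commutator_le_iff_map_commutator_eq_bot {A K N : Subgroup G} [N.Normal] :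
    ⁅A, K⁆ ≤ N ↔ ⁅A.map (QuotientGroup.mk' N), K.map (QuotientGroup.mk' N)⁆ = ⊥ := by
  rw [← map_commutator, map_eq_bot_iff, QuotientGroup.ker_mk']

theorem iSup_commutator_le {ι : Sort*} {A : ι → Subgroup G} {K N : Subgroup G} [N.Normal]
    (h : ∀ i, ⁅A i, K⁆ ≤ N) : ⁅⨆ i, A i, K⁆ ≤ N := by
  simp only [commutator_le_iff_map_commutator_eq_bot, commutator_eq_bot_iff_le_centralizer,
    map_le_iff_le_comap] at h ⊢
  exact iSup_le h

/-- The three subgroups lemma modulo a normal subgroup. -/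
theorem commutator_commutator_le_of_rotate {A B C N : Subgroup G} [N.Normal]
    (h₁ : ⁅⁅B, C⁆, A⁆ ≤ N) (h₂ : ⁅⁅C, A⁆, B⁆ ≤ N) : ⁅⁅A, B⁆, C⁆ ≤ N := by
  rw [commutator_le_iff_map_commutator_eq_bot, map_commutator] at h₁ h₂ ⊢
  exact commutator_commutator_eq_bot_of_rotate h₁ h₂

end Subgroup

section GenFilter

variable {G : Type*} [Group G]

theorem iteratedCommutator_concat {l : List (Subgroup G)} (hl : l ≠ []) (A : Subgroup G) :
    iteratedCommutator (l ++ [A]) = ⁅iteratedCommutator l, A⁆ := by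
  cases l with
  | nil => exact absurd rfl hl
  | cons B l => simp [iteratedCommutator]

theorem iteratedCommutator_normal {l : List (Subgroup G)} (h : ∀ A ∈ l, A.Normal) :
    (iteratedCommutator l).Normal := by
  induction l using List.reverseRecOn with
  | nil => exact inferInstanceAs (⊤ : Subgroup G).Normal
  | append_singleton l A ih =>
    have hA : A.Normal := h A (by simp)
    rcases eq_or_ne l [] with rfl | hl
    · exact hA
    · have := ih fun B hB => h B (by simp [hB])
      rw [iteratedCommutator_concat hl]
      infer_instance

variable {M : Type*} [AddCommMonoid M] {X : Set M} {π : M → Subgroup G}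

theorem iteratedCommutator_le_genFilter {l : List M} (hl : l ≠ []) (hlX : ∀ x ∈ l, x ∈ X) :
    iteratedCommutator (l.map π) ≤ genFilter X π l.sum :=
  le_iSup₂_of_le l ⟨hl, hlX, rfl⟩ le_rfl

theorem genFilter_normal (hπ : ∀ x ∈ X, (π x).Normal) (s : M) : (genFilter X π s).Normal := by
  refine @Subgroup.iSup_normal _ _ _ _ fun l => @Subgroup.iSup_normal _ _ _ _ fun hl => ?_
  exact iteratedCommutator_normal <| List.forall_mem_map.2 fun x hx => hπ x (hl.2.1 x hx)

theorem genFilter_commutator_le_of_mem (hπ : ∀ x ∈ X, (π x).Normal) (s : M) {x : M}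
    (hx : x ∈ X) : ⁅genFilter X π s, π x⁆ ≤ genFilter X π (s + x) := by
  have := genFilter_normal hπ (s + x)
  refine Subgroup.iSup_commutator_le fun l => Subgroup.iSup_commutator_le ?_
  rintro ⟨hl, hlX, rfl⟩
  have hle : iteratedCommutator ((l ++ [x]).map π) ≤ genFilter X π (l ++ [x]).sum :=
    iteratedCommutator_le_genFilter (by simp) (by simpa [or_imp, forall_and] using ⟨hlX, hx⟩)
  simpa [iteratedCommutator_concat, hl] using hle

theorem genFilter_commutator_iteratedCommutator_le (hπ : ∀ x ∈ X, (π x).Normal) {l : List M}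
    (hl : l ≠ []) (hlX : ∀ x ∈ l, x ∈ X) (s : M) :
    ⁅genFilter X π s, iteratedCommutator (l.map π)⁆ ≤ genFilter X π (s + l.sum) := by
  induction l using List.reverseRecOn generalizing s with
  | nil => exact absurd rfl hl
  | append_singleton l x ih =>
    have hx : x ∈ X := hlX x (by simp)
    rcases eq_or_ne l [] with rfl | hl
    · simpa [iteratedCommutator] using genFilter_commutator_le_of_mem hπ s hx
    · have ih := ih hl fun y hy => hlX y (by simp [hy])
      have := genFilter_normal hπ (s + (l ++ [x]).sum)
      rw [List.map_append, List.map_singleton, iteratedCommutator_concat (by simpa using hl),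
        Subgroup.commutator_comm]
      apply Subgroup.commutator_commutator_le_of_rotate
      · rw [Subgroup.commutator_comm (π x)]
        refine (Subgroup.commutator_mono (genFilter_commutator_le_of_mem hπ s hx) le_rfl).trans
          ((ih (s + x)).trans_eq ?_)
        rw [List.sum_append, List.sum_singleton, add_assoc, add_comm x]
      · refine (Subgroup.commutator_mono (ih s) le_rfl).trans
          ((genFilter_commutator_le_of_mem hπ _ hx).trans_eq ?_)
        rw [List.sum_append, List.sum_singleton, add_assoc]

end GenFilter

theorem statement5 {G : Type*} [Group G] {M : Type*} [AddCommMonoid M]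
    (X : Set M) (hX : AddSubmonoid.closure X = ⊤)
    (π : M → Subgroup G) (hπ : ∀ x ∈ X, (π x).Normal) (s t : M) :
    ⁅genFilter X π s, genFilter X π t⁆ ≤ genFilter X π (s + t) := by
  have := genFilter_normal hπ (s + t)
  rw [Subgroup.commutator_comm]
  refine Subgroup.iSup_commutator_le fun l => Subgroup.iSup_commutator_le ?_
  rintro ⟨hl, hlX, rfl⟩
  rw [Subgroup.commutator_comm]
  exact genFilter_commutator_iteratedCommutator_le hπ hl hlX s
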